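/- arXiv:1504.06023 — 3 statements merged into one kernel-verified Lean document; each statement's English description precedes it below -/
import Mathlib

section
/- Let f ∈ ℝ[x,y,z] be homogeneous of degree d and irreducible as a polynomial in ℂ[x,y,z]. Let a = (a₁, …, a_d) be a vector of homogeneous polynomials of degree d−1 in ℂ[x,y,z] such that f does not divide a₁. Suppose M = xM₁ + yM₂ + zM₃ and N = xN₁ + yN₂ + zN₃ are Hermitian pencils of d×d matrices such that det(M) and det(N) are not identically zero, and both satisfy a·M = (f, 0, …, 0), M·ā^T = (f, 0, …, 0)^T, a·N = (f, 0, …, 0), and N·ā^T = (f, 0, …, 0)^T as identities of vectors of polynomials. Then M = N, i.e., M₁ = N₁, M₂ = N₂, and M₃ = N₃. -/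
/-- The complexification of a real polynomial in three variables. -/
noncomputable def complexify (f : MvPolynomial (Fin 3) ℝ) : MvPolynomial (Fin 3) ℂ :=
  MvPolynomial.map (algebraMap ℝ ℂ) f

/-- The Hermitian pencil `x M₁ + y M₂ + z M₃` as a matrix of polynomials in `ℂ[x,y,z]`. -/
noncomputable def pencil {d : ℕ} (M₁ M₂ M₃ : Matrix (Fin d) (Fin d) ℂ) :
    Matrix (Fin d) (Fin d) (MvPolynomial (Fin 3) ℂ) := fun i j =>
  MvPolynomial.X 0 * MvPolynomial.C (M₁ i j) +
    MvPolynomial.X 1 * MvPolynomial.C (M₂ i j) +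
    MvPolynomial.X 2 * MvPolynomial.C (M₃ i j)

/-!
Write `det M = f g` and `det N = f h`; the factors exist because `f` is prime and does not divide
`a₁`, and they are constants because `det M` and `det N` have degree at most `d = deg f`.
The equations for `a` and `ā` say that `g a` is the first row of `adj M` and `g āᵀ` its first
column. Since `det M` divides the `2 × 2` minors of `adj M`, this determines `a₁ adj M` modulo `f`
as `g āᵀ a`, and likewise `a₁ adj N` as `h āᵀ a`. Hence `f` divides `h adj M - g adj N`, whose
entries have degree less than `d`. So `h adj M = g adj N`, and this forces `M = N`.
-/

open Matrix MvPolynomial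

section Single

variable {m n R : Type*} [NonUnitalNonAssocSemiring R] {A : Matrix m n R} {f : R}

theorem vecMul_eq_single_iff [Fintype m] [DecidableEq n] {a : m → R} {z : n} :
    a ᵥ* A = Pi.single z f ↔ ∀ j, ∑ i, a i * A i j = if j = z then f else 0 := by
  simp only [funext_iff, vecMul, dotProduct, Pi.single_apply]

theorem mulVec_eq_single_iff [Fintype n] [DecidableEq m] {b : n → R} {z : m} :
    A *ᵥ b = Pi.single z f ↔ ∀ i, ∑ j, A i j * b j = if i = z then f else 0 := by
  simp only [funext_iff, mulVec, dotProduct, Pi.single_apply]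

end Single

section CommRing

variable {n R : Type*} [Fintype n] [DecidableEq n] [CommRing R]

theorem det_dvd_adjugate_mul_adjugate_sub (A : Matrix n n R) (i j k l : n) :
    A.det ∣ A.adjugate k l * A.adjugate i j - A.adjugate i l * A.adjugate k j := by
  -- With row `l` of `A` replaced by `e_k`, the determinant becomes `A.adjugate k l`, while the
  -- product with `A.adjugate` is still divisible by `A.det` outside row `l`.
  let B := A.updateRow l (Pi.single k 1)
  have det_B : B.det = A.adjugate k l := (adjugate_apply A k l).symm
  have adjugate_B : B.adjugate i l = A.adjugate i l := by
    simp only [B, adjugate_apply, updateRow_idem]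
  have mul_adjugate_B : B * A.adjugate = (A.det • 1 : Matrix n n R).updateRow l (A.adjugate k) := by
    rw [updateRow_mul, mul_adjugate, single_one_vecMul, row_def]
  have expansion : A.adjugate k l * A.adjugate i j =
      ∑ m, B.adjugate i m * (B * A.adjugate) m j := by
    rw [← mul_apply, ← Matrix.mul_assoc, adjugate_mul, smul_mul, Matrix.one_mul,
      Matrix.smul_apply, smul_eq_mul, det_B]
  rw [expansion, ← Finset.add_sum_erase _ _ (Finset.mem_univ l), mul_adjugate_B, updateRow_self,
    adjugate_B, add_sub_cancel_left]
  refine Finset.dvd_sum fun m hm ↦ ?_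
  rw [updateRow_ne (Finset.ne_of_mem_erase hm), Matrix.smul_apply, smul_eq_mul]
  exact (dvd_mul_right _ _).mul_left _

theorem mul_adjugate_eq_det_mul_of_vecMul_eq_single {A : Matrix n n R} {a : n → R} {z : n} {f : R}
    (h : a ᵥ* A = Pi.single z f) (j : n) : f * A.adjugate z j = A.det * a j := by
  calc f * A.adjugate z j = (Pi.single z f ᵥ* A.adjugate) j := by simp [single_vecMul]
    _ = A.det * a j := by
      rw [← h, vecMul_vecMul, mul_adjugate, vecMul_smul, vecMul_one, Pi.smul_apply, smul_eq_mul]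

theorem mul_adjugate_eq_det_mul_of_mulVec_eq_single {A : Matrix n n R} {b : n → R} {z : n} {f : R}
    (h : A *ᵥ b = Pi.single z f) (i : n) : f * A.adjugate i z = A.det * b i := by
  rw [← vecMul_transpose] at h
  simpa [← adjugate_transpose] using mul_adjugate_eq_det_mul_of_vecMul_eq_single h i

theorem dvd_det_of_vecMul_eq_single {A : Matrix n n R} {a : n → R} {z : n} {f : R}
    (hf : Prime f) (hfa : ¬ f ∣ a z) (h : a ᵥ* A = Pi.single z f) : f ∣ A.det :=
  (hf.dvd_or_dvd ⟨_, (mul_adjugate_eq_det_mul_of_vecMul_eq_single h z).symm⟩).resolve_right hfa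

end CommRing

section IsDomain

variable {n R : Type*} [Fintype n] [DecidableEq n] [CommRing R] [IsDomain R]
  {A B : Matrix n n R} {f g h : R} {a b : n → R} {z : n}

theorem dvd_mul_adjugate_sub_of_vecMul_mulVec_eq_single (hdet : A.det ≠ 0) (hAg : A.det = f * g)
    (haA : a ᵥ* A = Pi.single z f) (hAb : A *ᵥ b = Pi.single z f) (i j : n) :
    f ∣ a z * A.adjugate i j - g * (b i * a j) := by
  have hfg : f * g ≠ 0 := hAg ▸ hdet
  have row (j) : A.adjugate z j = g * a j := mul_left_cancel₀ (left_ne_zero_of_mul hfg) <| by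
    rw [mul_adjugate_eq_det_mul_of_vecMul_eq_single haA, hAg, mul_assoc]
  have col (i) : A.adjugate i z = g * b i := mul_left_cancel₀ (left_ne_zero_of_mul hfg) <| by
    rw [mul_adjugate_eq_det_mul_of_mulVec_eq_single hAb, hAg, mul_assoc]
  refine (mul_dvd_mul_iff_right (right_ne_zero_of_mul hfg)).1 ?_
  convert det_dvd_adjugate_mul_adjugate_sub A i j z z using 1
  · exact hAg.symm
  · rw [row z, row j, col i]
    ring

theorem dvd_mul_adjugate_sub_mul_adjugate (hf : Prime f) (hfa : ¬ f ∣ a z)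
    (hdetA : A.det ≠ 0) (hdetB : B.det ≠ 0) (hAg : A.det = f * g) (hBh : B.det = f * h)
    (haA : a ᵥ* A = Pi.single z f) (hAb : A *ᵥ b = Pi.single z f)
    (haB : a ᵥ* B = Pi.single z f) (hBb : B *ᵥ b = Pi.single z f) (i j : n) :
    f ∣ h * A.adjugate i j - g * B.adjugate i j := by
  have hA := dvd_mul_adjugate_sub_of_vecMul_mulVec_eq_single hdetA hAg haA hAb i j
  have hB := dvd_mul_adjugate_sub_of_vecMul_mulVec_eq_single hdetB hBh haB hBb i j
  refine (hf.dvd_or_dvd (?_ : f ∣ a z * _)).resolve_left hfa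
  convert dvd_sub (hA.mul_left h) (hB.mul_left g) using 1
  ring

theorem eq_of_smul_adjugate_eq_smul_adjugate (hdetA : A.det ≠ 0) (hdetB : B.det ≠ 0)
    (hAg : A.det = f * g) (hBh : B.det = f * h) (hadj : h • A.adjugate = g • B.adjugate) :
    A = B := by
  have hne : f * g * h ≠ 0 := mul_ne_zero (hAg ▸ hdetA) (right_ne_zero_of_mul (hBh ▸ hdetB))
  refine smul_right_injective _ hne ?_
  calc (f * g * h) • A = g • (B * B.adjugate * A) := by
        rw [mul_adjugate, hBh, smul_mul, Matrix.one_mul, smul_smul]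
        ring_nf
    _ = B * (g • B.adjugate) * A := by rw [Matrix.mul_smul, smul_mul]
    _ = h • (B * (A.adjugate * A)) := by
        rw [← hadj, Matrix.mul_smul, smul_mul, Matrix.mul_assoc]
    _ = (f * g * h) • B := by
        rw [adjugate_mul, hAg, Matrix.mul_smul, Matrix.mul_one, smul_smul, mul_comm]

end IsDomain

section MvPolynomial

variable {n σ R : Type*} [Fintype n] [DecidableEq n] [CommRing R]

theorem totalDegree_det_le {A : Matrix n n (MvPolynomial σ R)} (k : n → ℕ)
    (hA : ∀ i j, (A i j).totalDegree ≤ k i) : A.det.totalDegree ≤ ∑ i, k i := by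
  rw [det_apply]
  refine totalDegree_finsetSum_le fun τ _ ↦ ?_
  calc (Equiv.Perm.sign τ • ∏ i, A (τ i) i).totalDegree
      ≤ (∏ i, A (τ i) i).totalDegree := totalDegree_smul_le _ _
    _ ≤ ∑ i, (A (τ i) i).totalDegree := totalDegree_finsetProd _ _
    _ ≤ ∑ i, k (τ i) := Finset.sum_le_sum fun i _ ↦ hA _ _
    _ = ∑ i, k i := Equiv.sum_comp τ k

theorem totalDegree_adjugate_lt {A : Matrix n n (MvPolynomial σ R)}
    (hA : ∀ i j, (A i j).totalDegree ≤ 1) (i j : n) :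
    (A.adjugate i j).totalDegree < Fintype.card n := by
  have row_degree (r s) : (A.updateRow j (Pi.single i 1) r s).totalDegree ≤
      if r = j then 0 else 1 := by
    rcases eq_or_ne r j with rfl | hr
    · rcases eq_or_ne s i with rfl | hs <;> simp [*]
    · simpa [hr] using hA r s
  calc (A.adjugate i j).totalDegree
      ≤ ∑ r, if r = j then 0 else 1 := adjugate_apply A i j ▸ totalDegree_det_le _ row_degree
    _ < ∑ _r : n, 1 := Finset.sum_lt_sum (fun r _ ↦ by split_ifs <;> simp) ⟨j, by simp⟩
    _ = Fintype.card n := by simp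

variable [IsDomain R]

theorem totalDegree_eq_zero_of_det_eq_mul {A : Matrix n n (MvPolynomial σ R)}
    {f g : MvPolynomial σ R} (hA : ∀ i j, (A i j).totalDegree ≤ 1)
    (hf : f.totalDegree = Fintype.card n) (hdet : A.det ≠ 0) (hAg : A.det = f * g) :
    g.totalDegree = 0 := by
  have hfg : f * g ≠ 0 := hAg ▸ hdet
  have hdeg : A.det.totalDegree ≤ Fintype.card n := by simpa using totalDegree_det_le (fun _ ↦ 1) hA
  rw [hAg, totalDegree_mul_of_isDomain (left_ne_zero_of_mul hfg) (right_ne_zero_of_mul hfg), hf]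
    at hdeg
  lia

theorem hermitian_pencil_unique_general {M N : Matrix n n (MvPolynomial σ R)}
    {f : MvPolynomial σ R} {a b : n → MvPolynomial σ R} {z : n}
    (hf : Prime f) (hfdeg : f.totalDegree = Fintype.card n) (hfa : ¬ f ∣ a z)
    (hM : ∀ i j, (M i j).totalDegree ≤ 1) (hN : ∀ i j, (N i j).totalDegree ≤ 1)
    (hdetM : M.det ≠ 0) (hdetN : N.det ≠ 0)
    (haM : a ᵥ* M = Pi.single z f) (hMb : M *ᵥ b = Pi.single z f)
    (haN : a ᵥ* N = Pi.single z f) (hNb : N *ᵥ b = Pi.single z f) : M = N := by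
  obtain ⟨g, hg⟩ := dvd_det_of_vecMul_eq_single hf hfa haM
  obtain ⟨h, hh⟩ := dvd_det_of_vecMul_eq_single hf hfa haN
  have hg0 := totalDegree_eq_zero_of_det_eq_mul hM hfdeg hdetM hg
  have hh0 := totalDegree_eq_zero_of_det_eq_mul hN hfdeg hdetN hh
  refine eq_of_smul_adjugate_eq_smul_adjugate hdetM hdetN hg hh (ext fun i j ↦ sub_eq_zero.1 ?_)
  have hdvd := dvd_mul_adjugate_sub_mul_adjugate hf hfa hdetM hdetN hg hh haM hMb haN hNb i j
  have hdeg : (h * M.adjugate i j - g * N.adjugate i j).totalDegree < f.totalDegree := by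
    have hM' := totalDegree_adjugate_lt hM i j
    have hN' := totalDegree_adjugate_lt hN i j
    have hsub := totalDegree_sub (h * M.adjugate i j) (g * N.adjugate i j)
    have hhM := totalDegree_mul h (M.adjugate i j)
    have hgN := totalDegree_mul g (N.adjugate i j)
    lia
  by_contra hne
  exact hdeg.not_ge (totalDegree_le_of_dvd_of_isDomain hdvd hne)

end MvPolynomial

section Pencil

variable {d : ℕ} {M₁ M₂ M₃ N₁ N₂ N₃ : Matrix (Fin d) (Fin d) ℂ}

theorem totalDegree_pencil_le (i j : Fin d) : (pencil M₁ M₂ M₃ i j).totalDegree ≤ 1 := by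
  have linear (k : Fin 3) (c : ℂ) : (X k * C c : MvPolynomial (Fin 3) ℂ).IsHomogeneous 1 :=
    mul_comm (X k) (C c) ▸ isHomogeneous_C_mul_X c k
  exact (((linear _ _).add (linear _ _)).add (linear _ _)).totalDegree_le

theorem map_eval_pencil (v : Fin 3 → ℂ) :
    (pencil M₁ M₂ M₃).map (eval v) = v 0 • M₁ + v 1 • M₂ + v 2 • M₃ := by
  ext i j
  simp [pencil]

theorem pencil_inj :
    pencil M₁ M₂ M₃ = pencil N₁ N₂ N₃ ↔ M₁ = N₁ ∧ M₂ = N₂ ∧ M₃ = N₃ := by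
  refine ⟨fun h ↦ ?_, by rintro ⟨rfl, rfl, rfl⟩; rfl⟩
  have eval_eq (v : Fin 3 → ℂ) : v 0 • M₁ + v 1 • M₂ + v 2 • M₃ =
      v 0 • N₁ + v 1 • N₂ + v 2 • N₃ := by
    rw [← map_eval_pencil, h, map_eval_pencil]
  exact ⟨by simpa using eval_eq ![1, 0, 0], by simpa using eval_eq ![0, 1, 0],
    by simpa using eval_eq ![0, 0, 1]⟩

end Pencil

/-- Let `f ∈ ℝ[x,y,z]` be homogeneous of degree `d`, irreducible in
`ℂ[x,y,z]`. Let `a = (a₁, …, a_d)` be homogeneous polynomials of degree `d - 1` with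
`f ∤ a₁`. If `M` and `N` are Hermitian pencils with not identically zero determinant
both satisfying `a · M = (f, 0, …, 0)` and `M · āᵀ = (f, 0, …, 0)ᵀ`, then `M = N`. -/
theorem hermitian_pencil_unique {d : ℕ} (hd : 0 < d)
    (f : MvPolynomial (Fin 3) ℝ) (hfhom : f.IsHomogeneous d)
    (hirr : Irreducible (complexify f))
    (a : Fin d → MvPolynomial (Fin 3) ℂ)
    (hahom : ∀ i, (a i).IsHomogeneous (d - 1))
    (hndvd : ¬ complexify f ∣ a ⟨0, hd⟩)
    (M₁ M₂ M₃ N₁ N₂ N₃ : Matrix (Fin d) (Fin d) ℂ)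
    (hM₁ : M₁.IsHermitian) (hM₂ : M₂.IsHermitian) (hM₃ : M₃.IsHermitian)
    (hN₁ : N₁.IsHermitian) (hN₂ : N₂.IsHermitian) (hN₃ : N₃.IsHermitian)
    (hdetM : (pencil M₁ M₂ M₃).det ≠ 0) (hdetN : (pencil N₁ N₂ N₃).det ≠ 0)
    (haM : ∀ j, ∑ i, a i * pencil M₁ M₂ M₃ i j =
      if j = ⟨0, hd⟩ then complexify f else 0)
    (hMa : ∀ i, ∑ j, pencil M₁ M₂ M₃ i j * MvPolynomial.map (starRingEnd ℂ) (a j) =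
      if i = ⟨0, hd⟩ then complexify f else 0)
    (haN : ∀ j, ∑ i, a i * pencil N₁ N₂ N₃ i j =
      if j = ⟨0, hd⟩ then complexify f else 0)
    (hNa : ∀ i, ∑ j, pencil N₁ N₂ N₃ i j * MvPolynomial.map (starRingEnd ℂ) (a j) =
      if i = ⟨0, hd⟩ then complexify f else 0) :
    M₁ = N₁ ∧ M₂ = N₂ ∧ M₃ = N₃ :=
  pencil_inj.1 <| hermitian_pencil_unique_general hirr.prime
    (((hfhom.map _).totalDegree hirr.ne_zero).trans (Fintype.card_fin d).symm) hndvd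
    totalDegree_pencil_le totalDegree_pencil_le hdetM hdetN
    (vecMul_eq_single_iff.2 haM) (mulVec_eq_single_iff.2 hMa)
    (vecMul_eq_single_iff.2 haN) (mulVec_eq_single_iff.2 hNa)
end

section
/- Let f ∈ ℝ[x,y,z] be homogeneous of degree d and irreducible as a polynomial in ℂ[x,y,z]. Let a = (a₁, …, a_d) be a vector of homogeneous polynomials of degree d−1 in ℂ[x,y,z] such that f does not divide a_i for at least one index i. Let M be a d×d matrix whose entries are linear forms in ℂ[x,y,z], such that a·M = (f, 0, …, 0) as an identity of vectors of polynomials and det(M) is not identically zero. Then det(M) = α·f for some nonzero constant α ∈ ℂ. -/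
/-!
Multiplying `a · M` on the right by the adjugate of `M` gives `det M • a`. Hence a prime dividing
every entry of `a · M` divides `det M * aᵢ` for all `i`, and so divides `det M` as soon as it does
not divide some `aᵢ`. For `f` this forces `det M = f * g`, and since the degree of `det M` is at
most that of `f`, the cofactor `g` is a constant.
-/

section Matrix

open Matrix

variable {n R : Type*} [Fintype n] [DecidableEq n] [CommRing R]

theorem vecMul_vecMul_adjugate (v : n → R) (M : Matrix n n R) :
    v ᵥ* M ᵥ* M.adjugate = M.det • v := by
  rw [vecMul_vecMul, mul_adjugate, vecMul_smul, vecMul_one]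

theorem dvd_det_mul_of_forall_dvd_vecMul {p : R} {v : n → R} {M : Matrix n n R}
    (h : ∀ j, p ∣ (v ᵥ* M) j) (i : n) : p ∣ M.det * v i := by
  have hadj : ∑ j, (v ᵥ* M) j * M.adjugate j i = M.det * v i :=
    congrFun (vecMul_vecMul_adjugate v M) i
  exact hadj ▸ Finset.dvd_sum fun j _ => (h j).mul_right _

theorem dvd_det_of_prime_of_forall_dvd_vecMul {p : R} (hp : Prime p) {v : n → R}
    {M : Matrix n n R} (hv : ∃ i, ¬ p ∣ v i) (h : ∀ j, p ∣ (v ᵥ* M) j) : p ∣ M.det :=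
  let ⟨i, hi⟩ := hv
  (hp.dvd_or_dvd (dvd_det_mul_of_forall_dvd_vecMul h i)).resolve_right hi

end Matrix

section MvPolynomial

open Matrix MvPolynomial

variable {σ R n : Type*}

theorem exists_eq_C_mul_of_dvd_of_totalDegree_le [CommSemiring R] [NoZeroDivisors R]
    {f g : MvPolynomial σ R} (hg : g ≠ 0) (hdvd : f ∣ g) (hdeg : g.totalDegree ≤ f.totalDegree) :
    ∃ α : R, α ≠ 0 ∧ g = C α * f := by
  obtain ⟨q, rfl⟩ := hdvd
  obtain ⟨hf, hq⟩ := mul_ne_zero_iff.mp hg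
  have hq_deg : q.totalDegree = 0 := by
    rw [totalDegree_mul_of_isDomain hf hq] at hdeg
    lia
  have hq_C : q = C (q.coeff 0) := totalDegree_eq_zero_iff_eq_C.mp hq_deg
  refine ⟨q.coeff 0, fun hα => hq ?_, ?_⟩
  · rw [hq_C, hα, C_0]
  · rw [← hq_C, mul_comm]

theorem totalDegree_det_le_sum [Fintype n] [DecidableEq n] [CommRing R]
    {M : Matrix n n (MvPolynomial σ R)} {r c : n → ℕ}
    (hM : ∀ i j, (M i j).totalDegree ≤ r i + c j) :
    M.det.totalDegree ≤ ∑ i, (r i + c i) := by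
  rw [det_apply]
  refine totalDegree_finsetSum_le fun τ _ => ?_
  calc (Equiv.Perm.sign τ • ∏ i, M (τ i) i).totalDegree
      ≤ (∏ i, M (τ i) i).totalDegree := totalDegree_smul_le _ _
    _ ≤ ∑ i, (M (τ i) i).totalDegree := totalDegree_finsetProd _ _
    _ ≤ ∑ i, (r (τ i) + c i) := Finset.sum_le_sum fun i _ => hM _ _
    _ = ∑ i, (r i + c i) := by
      rw [Finset.sum_add_distrib, Equiv.sum_comp τ r, Finset.sum_add_distrib]

theorem det_eq_const_mul_of_row_relation_general [Fintype n] [DecidableEq n]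
    [CommRing R] [NoZeroDivisors R] {f : MvPolynomial σ R} (hf : Prime f)
    {a : n → MvPolynomial σ R} (hndvd : ∃ i, ¬ f ∣ a i)
    {M : Matrix n n (MvPolynomial σ R)} {r c : n → ℕ}
    (hM : ∀ i j, (M i j).totalDegree ≤ r i + c j)
    (hdeg : ∑ i, (r i + c i) ≤ f.totalDegree)
    (ha : ∀ j, f ∣ (a ᵥ* M) j) (hdet : M.det ≠ 0) :
    ∃ α : R, α ≠ 0 ∧ M.det = C α * f :=
  exists_eq_C_mul_of_dvd_of_totalDegree_le hdet
    (dvd_det_of_prime_of_forall_dvd_vecMul hf hndvd ha)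
    ((totalDegree_det_le_sum hM).trans hdeg)

end MvPolynomial

/-- Let `f ∈ ℝ[x,y,z]` be homogeneous of degree `d` and irreducible in
`ℂ[x,y,z]`. Let `a = (a₁, …, a_d)` be homogeneous polynomials of degree `d - 1` in
`ℂ[x,y,z]` with `f ∤ aᵢ` for some `i`, and let `M` be a `d × d` matrix of linear forms
with `a · M = (f, 0, …, 0)` and `det M ≠ 0`. Then `det M = α • f` for some nonzero
constant `α ∈ ℂ`. -/
theorem det_eq_const_mul_of_row_relation {d : ℕ} (hd : 0 < d)
    (f : MvPolynomial (Fin 3) ℝ) (hfhom : f.IsHomogeneous d)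
    (hirr : Irreducible (complexify f))
    (a : Fin d → MvPolynomial (Fin 3) ℂ)
    (hahom : ∀ i, (a i).IsHomogeneous (d - 1))
    (hndvd : ∃ i, ¬ complexify f ∣ a i)
    (M : Matrix (Fin d) (Fin d) (MvPolynomial (Fin 3) ℂ))
    (hlin : ∀ i j, (M i j).IsHomogeneous 1)
    (ha : ∀ j, ∑ i, a i * M i j = if j = ⟨0, hd⟩ then complexify f else 0)
    (hdet : M.det ≠ 0) :
    ∃ α : ℂ, α ≠ 0 ∧ M.det = MvPolynomial.C α * complexify f := by
  have hdeg : (complexify f).totalDegree = d := (hfhom.map _).totalDegree hirr.ne_zero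
  have hdvd (j : Fin d) : complexify f ∣ Matrix.vecMul a M j := by
    rw [show Matrix.vecMul a M j = _ from ha j]
    split_ifs <;> simp
  exact det_eq_const_mul_of_row_relation_general (r := fun _ => 1) (c := fun _ => 0) hirr.prime
    hndvd (fun i j => (hlin i j).totalDegree_le) (by simp [hdeg]) hdvd hdet
end

section
/- Let M₁, M₂, M₃ be Hermitian d×d complex matrices and e ∈ ℝ³ a point such that e₁M₁ + e₂M₂ + e₃M₃ is positive definite. Then the polynomial f(p) = det(p₁M₁ + p₂M₂ + p₃M₃), which takes real values on ℝ³, is hyperbolic with respect to e: f(e) > 0 and for every p ∈ ℝ³ all complex roots of the univariate polynomial t ↦ det((te₁+p₁)M₁ + (te₂+p₂)M₂ + (te₃+p₃)M₃) are real. -/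
open scoped ComplexOrder

section StarRing

variable {R α n ι : Type*}

lemma isHermitian_sum_smul [Star R] [AddCommMonoid α] [StarAddMonoid α] [SMul R α]
    [StarModule R α] {s : Finset ι} {c : ι → R} {M : ι → Matrix n n α}
    (hc : ∀ i ∈ s, IsSelfAdjoint (c i)) (hM : ∀ i ∈ s, (M i).IsHermitian) :
    (∑ i ∈ s, c i • M i).IsHermitian :=
  isSelfAdjoint_sum s fun i hi => (hM i hi).smul (hc i hi)

lemma isSelfAdjoint_det_of_isHermitian [CommRing α] [StarRing α] [Fintype n] [DecidableEq n]
    {A : Matrix n n α} (hA : A.IsHermitian) : IsSelfAdjoint A.det := by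
  rw [isSelfAdjoint_iff, ← A.det_conjTranspose, hA.eq]

end StarRing

open scoped Matrix in
lemma im_eq_zero_of_det_smul_add_eq_zero {𝕜 n : Type*} [RCLike 𝕜] [Fintype n]
    [DecidableEq n] {A B : Matrix n n 𝕜} (hA : A.PosDef) (hB : B.IsHermitian) {t : 𝕜}
    (ht : (t • A + B).det = 0) : RCLike.im t = 0 := by
  -- A kernel vector `v` exhibits `t` as the quotient `-(v* B v) / (v* A v)` of real numbers.
  obtain ⟨v, hv, hker⟩ := Matrix.exists_mulVec_eq_zero_iff.mpr ht
  have hform : t * (star v ⬝ᵥ A *ᵥ v) + star v ⬝ᵥ B *ᵥ v = 0 := by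
    rw [← smul_eq_mul, ← dotProduct_smul, ← Matrix.smul_mulVec, ← dotProduct_add,
      ← Matrix.add_mulVec, hker, dotProduct_zero]
  obtain ⟨hApos, hAim⟩ := RCLike.pos_iff.mp (hA.dotProduct_mulVec_pos hv)
  have him : RCLike.im t * RCLike.re (star v ⬝ᵥ A *ᵥ v) = 0 := by
    simpa [RCLike.mul_im, hAim, hB.im_star_dotProduct_mulVec_self v] using
      congrArg RCLike.im hform
  exact (mul_eq_zero.mp him).resolve_right hApos.ne'

theorem det_hermitian_pencil_hyperbolic_general {n ι : Type*} [Fintype n] [DecidableEq n]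
    [Fintype ι] {M : ι → Matrix n n ℂ} (hM : ∀ i, (M i).IsHermitian) {e : ι → ℝ}
    (hpd : (∑ i, (e i : ℂ) • M i).PosDef) :
    (∀ p : ι → ℝ, (∑ i, (p i : ℂ) • M i).det.im = 0) ∧
    0 < (∑ i, (e i : ℂ) • M i).det.re ∧
    ∀ (p : ι → ℝ) (t : ℂ),
      (∑ i, (t * (e i : ℂ) + (p i : ℂ)) • M i).det = 0 → t.im = 0 := by
  have hherm (p : ι → ℝ) : (∑ i, (p i : ℂ) • M i).IsHermitian :=
    isHermitian_sum_smul (fun i _ => Complex.conj_ofReal (p i)) fun i _ => hM i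
  refine ⟨fun p => Complex.conj_eq_iff_im.mp (isSelfAdjoint_det_of_isHermitian (hherm p)),
    (Complex.pos_iff.mp hpd.det_pos).1, fun p t hroot => ?_⟩
  refine im_eq_zero_of_det_smul_add_eq_zero hpd (hherm p) ?_
  simpa only [add_smul, mul_smul, Finset.sum_add_distrib, ← Finset.smul_sum] using hroot

/-- If `M₁, M₂, M₃` are Hermitian `d × d` complex matrices and
`e ∈ ℝ³` is such that `e₁M₁ + e₂M₂ + e₃M₃` is positive definite, then the polynomial
`p ↦ det (p₁M₁ + p₂M₂ + p₃M₃)` takes real values on `ℝ³` and is hyperbolic with respect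
to `e`: its value at `e` is positive, and for every `p ∈ ℝ³` all complex roots of
`t ↦ det ((te₁+p₁)M₁ + (te₂+p₂)M₂ + (te₃+p₃)M₃)` are real. -/
theorem det_hermitian_pencil_hyperbolic {d : ℕ}
    (M₁ M₂ M₃ : Matrix (Fin d) (Fin d) ℂ)
    (h₁ : M₁.IsHermitian) (h₂ : M₂.IsHermitian) (h₃ : M₃.IsHermitian)
    (e : Fin 3 → ℝ)
    (hpd : ((e 0 : ℂ) • M₁ + (e 1 : ℂ) • M₂ + (e 2 : ℂ) • M₃).PosDef) :
    (∀ p : Fin 3 → ℝ,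
      (((p 0 : ℂ) • M₁ + (p 1 : ℂ) • M₂ + (p 2 : ℂ) • M₃).det).im = 0) ∧
    0 < (((e 0 : ℂ) • M₁ + (e 1 : ℂ) • M₂ + (e 2 : ℂ) • M₃).det).re ∧
    ∀ p : Fin 3 → ℝ, ∀ t : ℂ,
      ((t * (e 0 : ℂ) + (p 0 : ℂ)) • M₁ + (t * (e 1 : ℂ) + (p 1 : ℂ)) • M₂ +
        (t * (e 2 : ℂ) + (p 2 : ℂ)) • M₃).det = 0 → t.im = 0 := by
  have hM : ∀ i, (![M₁, M₂, M₃] i).IsHermitian := by simp [Fin.forall_fin_succ, h₁, h₂, h₃]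
  simpa [Fin.sum_univ_three] using
    det_hermitian_pencil_hyperbolic_general hM (e := e) (by simpa [Fin.sum_univ_three] using hpd)
end
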